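/- There exists a bounded sequence w = (w_n)_{n≥1} of nonzero scalars such that the weighted backward shift B_w on c₀ is very frequently hypercyclic but not chaotic; moreover, this B_w has no unimodular eigenvalues (no eigenvalue λ with |λ| = 1) and is not topologically mixing. -/

import Mathlib

open Filter Topology
open scoped Classical ZeroAtInfty

/-- Upper density of a set of natural numbers. -/
noncomputable def upperDensity (A : Set ℕ) : ℝ :=
  Filter.limsup
    (fun N : ℕ => (((Finset.range (N + 1)).filter (fun n => n ∈ A)).card : ℝ) / ((N : ℝ) + 1))
    Filter.atTop

/-- Lower density of a set of natural numbers. -/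
noncomputable def lowerDensity (A : Set ℕ) : ℝ :=
  Filter.liminf
    (fun N : ℕ => (((Finset.range (N + 1)).filter (fun n => n ∈ A)).card : ℝ) / ((N : ℝ) + 1))
    Filter.atTop

/-- Upper Banach density of a set of natural numbers. -/
noncomputable def upperBanachDensity (A : Set ℕ) : ℝ :=
  ⨅ N : ℕ, ⨆ m : ℕ, (((Finset.Icc m (m + N)).filter (fun n => n ∈ A)).card : ℝ) / ((N : ℝ) + 1)

/-!
Write `P n = w 1 ⋯ w n`, so that `P n * (B_w ^ m x) n = P (n + m) * x (n + m)`. Suppose that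
`|P n|` stays bounded along a sequence of times. If `B_w ^ p x = c • x` with `|c| = 1`, then
`|P * x|` is constant along `j + p ℕ`; since `w` is bounded, `P` is bounded at infinitely many of
these indices, and `x → 0` forces `x = 0`. This excludes periodic points and unimodular eigenvalues,
and `(B_w ^ n x) 0 = P n * x n` excludes mixing.

For the weights used here, `P n` is `a ^ d`, where `|a| > 2` and `d` is the time elapsed since the
last of a sparse sequence of reset times. The very frequently hypercyclic vector is a sum of blocks,
divided by `P`, placed at visiting times of infinitely many levels, one target per level. A visit is
good when its distances to the other blocks stay away from the reset times. Level `q` uses one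
residue class modulo `8 Q_q`, deprived of the times that conflict with higher levels `p`. From the
`p`-th on, all reset times are congruent modulo `8 Q_p`, so these conflicts occupy only `O(p ^ 2)`
residue classes modulo `8 Q_p`. As `Q_p` grows very fast, windows of length `8 Q_q` that miss every
visit of level `q` have density at most `2 ^ (-q)`.
-/

section Density

/-- The proportion of `[0, N]` occupied by `A`, whose `liminf` is the lower density of `A`. -/
noncomputable def partialDensity (A : Set ℕ) (N : ℕ) : ℝ :=
  (((Finset.range (N + 1)).filter (fun n => n ∈ A)).card : ℝ) / ((N : ℝ) + 1)

variable {A B : Set ℕ} {N : ℕ}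

lemma partialDensity_nonneg (A : Set ℕ) (N : ℕ) : 0 ≤ partialDensity A N := by
  unfold partialDensity; positivity

lemma partialDensity_compl_add (A : Set ℕ) (N : ℕ) :
    partialDensity Aᶜ N + partialDensity A N = 1 := by
  have hcard := Finset.card_filter_add_card_filter_not (s := Finset.range (N + 1)) (· ∈ A)
  rw [Finset.card_range] at hcard
  simp only [partialDensity, Set.mem_compl_iff]
  rw [← add_div, div_eq_one_iff_eq (by positivity), add_comm]
  exact_mod_cast hcard

lemma partialDensity_le_one (A : Set ℕ) (N : ℕ) : partialDensity A N ≤ 1 := by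
  linarith [partialDensity_compl_add A N, partialDensity_nonneg Aᶜ N]

lemma partialDensity_mono_of_forall_le (h : ∀ n ≤ N, n ∈ A → n ∈ B) :
    partialDensity A N ≤ partialDensity B N := by
  refine div_le_div_of_nonneg_right (Nat.cast_le.mpr (Finset.card_le_card fun n hn => ?_))
    (by positivity)
  rw [Finset.mem_filter, Finset.mem_range_succ_iff] at hn ⊢
  exact ⟨hn.1, h n hn.1 hn.2⟩

lemma partialDensity_mono (h : A ⊆ B) (N : ℕ) : partialDensity A N ≤ partialDensity B N :=
  partialDensity_mono_of_forall_le fun _ _ hn => h hn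

lemma partialDensity_biUnion_le {ι : Type*} (t : Finset ι) (G : ι → Set ℕ) (N : ℕ) :
    partialDensity (⋃ i ∈ t, G i) N ≤ ∑ i ∈ t, partialDensity (G i) N := by
  have hsub : (Finset.range (N + 1)).filter (· ∈ ⋃ i ∈ t, G i) ⊆
      t.biUnion fun i => (Finset.range (N + 1)).filter (· ∈ G i) := fun n hn => by
    simpa [and_left_comm] using hn
  unfold partialDensity
  rw [← Finset.sum_div]
  gcongr
  exact_mod_cast (Finset.card_le_card hsub).trans Finset.card_biUnion_le

lemma partialDensity_preimage_add_le {κ : ℝ} (hA : ∀ N, partialDensity A N ≤ κ) {n : ℕ}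
    (hn : n ≤ N) : partialDensity {m | m + n ∈ A} N ≤ 2 * κ := by
  have hcard : ((Finset.range (N + 1)).filter (· + n ∈ A)).card ≤
      ((Finset.range (N + n + 1)).filter (· ∈ A)).card := by
    refine Finset.card_le_card_of_injOn (· + n) (fun m hm => ?_) (add_left_injective n).injOn
    simp only [Finset.coe_filter, Finset.mem_range, Set.mem_ofPred_eq] at hm ⊢
    exact ⟨by omega, hm.2⟩
  have hκ : 0 ≤ κ := (partialDensity_nonneg A 0).trans (hA 0)
  have hAN := hA (N + n)
  unfold partialDensity at hAN ⊢
  rw [div_le_iff₀ (by positivity)] at hAN ⊢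
  have hn' : (n : ℝ) ≤ N := by exact_mod_cast hn
  calc _ ≤ _ := Nat.cast_le.mpr hcard
    _ ≤ κ * ((N + n : ℕ) + 1) := hAN
    _ ≤ κ * (2 * (N + 1)) := by gcongr; push_cast; linarith
    _ = 2 * κ * (N + 1) := by ring

lemma partialDensity_exists_add_mem_le {κ : ℝ} (hA : ∀ N, partialDensity A N ≤ κ) {R : ℕ}
    (hR : R ≤ N) : partialDensity {m | ∃ n ≤ R, m + n ∈ A} N ≤ 2 * (R + 1) * κ := by
  have hsub : {m | ∃ n ≤ R, m + n ∈ A} ⊆ ⋃ n ∈ Finset.range (R + 1), {m | m + n ∈ A} := by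
    rintro m ⟨n, hn, hmn⟩
    exact Set.mem_biUnion (by simpa [Nat.lt_succ_iff] using hn) hmn
  calc partialDensity {m | ∃ n ≤ R, m + n ∈ A} N
      ≤ ∑ n ∈ Finset.range (R + 1), partialDensity {m | m + n ∈ A} N :=
        (partialDensity_mono hsub N).trans (partialDensity_biUnion_le _ _ N)
    _ ≤ ∑ n ∈ Finset.range (R + 1), 2 * κ := Finset.sum_le_sum fun n hn =>
        partialDensity_preimage_add_le hA ((Finset.mem_range_succ_iff.mp hn).trans hR)
    _ = 2 * (R + 1) * κ := by
        rw [Finset.sum_const, Finset.card_range, nsmul_eq_mul]; push_cast; ring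

lemma partialDensity_modEq_le {M : ℕ} (hM : 0 < M) (r : ℤ) (N : ℕ) :
    partialDensity {n | (n : ℤ) ≡ r [ZMOD M]} N ≤ 1 / M + 1 / (N + 1) := by
  obtain ⟨s, hs⟩ : ∃ s : ℕ, (s : ℤ) ≡ r [ZMOD M] :=
    (Int.existsUnique_equiv_nat r (by exact_mod_cast hM)).imp fun _ h => h.2
  have hmem : ∀ n : ℕ, (n : ℤ) ≡ r [ZMOD M] ↔ n ≡ s [MOD M] := fun n => by
    rw [← Int.natCast_modEq_iff]
    exact ⟨fun h => h.trans hs.symm, fun h => h.trans hs⟩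
  have hcount : ((Finset.range (N + 1)).filter fun n : ℕ => (n : ℤ) ≡ r [ZMOD M]).card ≤
      (N + 1) / M + 1 := by
    rw [Finset.filter_congr fun n _ => hmem n, ← Nat.count_eq_card_filter_range,
      Nat.count_modEq_card _ hM]
    split_ifs <;> omega
  have hdiv : (((N + 1) / M : ℕ) : ℝ) ≤ ((N : ℝ) + 1) / M := by exact_mod_cast Nat.cast_div_le
  simp only [partialDensity, Set.mem_ofPred_eq]
  rw [div_le_iff₀ (by positivity)]
  calc _ ≤ (((N + 1) / M : ℕ) : ℝ) + 1 := by exact_mod_cast hcount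
    _ ≤ ((N : ℝ) + 1) / M + 1 := by gcongr
    _ = _ := by field_simp

lemma partialDensity_le_of_residues {M : ℕ} (hM : 0 < M) (R : Finset ℤ)
    (hA : ∀ n ∈ A, ∃ r ∈ R, (n : ℤ) ≡ r [ZMOD M]) {a : ℝ} (ha : 0 < a)
    (haA : ∀ n ∈ A, a ≤ n) (N : ℕ) : partialDensity A N ≤ R.card * (1 / M + 1 / a) := by
  by_cases hN : ∃ n ≤ N, n ∈ A
  · obtain ⟨n, hnN, hnA⟩ := hN
    have haN : a ≤ N + 1 := by
      have : (n : ℝ) ≤ N := by exact_mod_cast hnN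
      linarith [haA n hnA]
    have hsub : A ⊆ ⋃ r ∈ R, {n : ℕ | (n : ℤ) ≡ r [ZMOD M]} := fun n hn => by
      simpa using hA n hn
    calc partialDensity A N ≤ ∑ r ∈ R, partialDensity {n | (n : ℤ) ≡ r [ZMOD M]} N :=
          (partialDensity_mono hsub N).trans (partialDensity_biUnion_le _ _ N)
      _ ≤ ∑ r ∈ R, (1 / M + 1 / a : ℝ) := Finset.sum_le_sum fun r _ =>
          (partialDensity_modEq_le hM r N).trans (by gcongr)
      _ = R.card * (1 / M + 1 / a) := by rw [Finset.sum_const, nsmul_eq_mul]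
  · have hempty : partialDensity A N = 0 := by
      unfold partialDensity
      rw [Finset.filter_eq_empty_iff.mpr fun n hn hnA =>
        hN ⟨n, Finset.mem_range_succ_iff.mp hn, hnA⟩]
      simp
    rw [hempty]
    positivity

lemma isBoundedUnder_ge_partialDensity (A : Set ℕ) :
    atTop.IsBoundedUnder (· ≥ ·) (partialDensity A) :=
  isBoundedUnder_of ⟨0, partialDensity_nonneg A⟩

lemma isCoboundedUnder_ge_partialDensity (A : Set ℕ) :
    atTop.IsCoboundedUnder (· ≥ ·) (partialDensity A) :=
  IsBoundedUnder.isCoboundedUnder_ge (isBoundedUnder_of ⟨1, partialDensity_le_one A⟩)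

lemma lowerDensity_mono (h : A ⊆ B) : lowerDensity A ≤ lowerDensity B :=
  liminf_le_liminf (.of_forall (partialDensity_mono h))
    (isBoundedUnder_ge_partialDensity A) (isCoboundedUnder_ge_partialDensity B)

lemma lowerDensity_le_one (A : Set ℕ) : lowerDensity A ≤ 1 :=
  liminf_le_of_frequently_le (Frequently.of_forall (partialDensity_le_one A))
    (isBoundedUnder_ge_partialDensity A)

lemma le_lowerDensity {c : ℝ} (h : ∀ᶠ N in atTop, c ≤ partialDensity A N) : c ≤ lowerDensity A :=
  le_liminf_of_le (isCoboundedUnder_ge_partialDensity A) h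

lemma one_sub_tsum_le_lowerDensity {ι : Type*} {G : ι → Set ℕ} {ε : ι → ℝ} (hε : Summable ε)
    (hcover : Aᶜ ⊆ ⋃ i, G i) (hG : ∀ᶠ N in atTop, ∀ i, partialDensity (G i) N ≤ ε i) :
    1 - ∑' i, ε i ≤ lowerDensity A := by
  refine le_lowerDensity (hG.mono fun N hN => ?_)
  have hε0 : ∀ i, 0 ≤ ε i := fun i => (partialDensity_nonneg _ N).trans (hN i)
  obtain ⟨I, hI, hcoverI⟩ := Set.finite_subset_iUnion ((Set.finite_Iic N).inter_of_left Aᶜ)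
    (Set.inter_subset_right.trans hcover)
  have hcompl : partialDensity Aᶜ N ≤ ∑' i, ε i :=
    calc partialDensity Aᶜ N ≤ partialDensity (⋃ i ∈ hI.toFinset, G i) N :=
          partialDensity_mono_of_forall_le fun n hnN hn => by simpa using hcoverI ⟨hnN, hn⟩
      _ ≤ ∑ i ∈ hI.toFinset, ε i :=
          (partialDensity_biUnion_le _ G N).trans (Finset.sum_le_sum fun i _ => hN i)
      _ ≤ ∑' i, ε i := hε.sum_le_tsum _ fun i _ => hε0 i
  linarith [partialDensity_compl_add A N]

lemma tendsto_lowerDensity_one_of_monotone {S : ℕ → Set ℕ} (hS : Monotone S)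
    (h : ∀ c < 1, ∃ R, c < lowerDensity (S R)) :
    Tendsto (fun N => lowerDensity (S N)) atTop (𝓝 1) := by
  refine tendsto_order.mpr ⟨fun c hc => ?_, fun c hc => .of_forall fun N =>
    (lowerDensity_le_one _).trans_lt hc⟩
  obtain ⟨R, hR⟩ := h c hc
  filter_upwards [eventually_ge_atTop R] with N hN
  exact hR.trans_le (lowerDensity_mono (hS hN))

end Density

section NullSequences

/-- The element of `c₀` given by a null sequence. -/
def c0OfTendsto {E : Type*} [TopologicalSpace E] [Zero E] (g : ℕ → E)
    (hg : Tendsto g atTop (𝓝 0)) : C₀(ℕ, E) where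
  toFun := g
  continuous_toFun := continuous_of_discreteTopology
  zero_at_infty' := by rwa [cocompact_eq_cofinite, Nat.cofinite_eq_atTop]

@[simp]
lemma c0OfTendsto_apply {E : Type*} [TopologicalSpace E] [Zero E] (g : ℕ → E)
    (hg : Tendsto g atTop (𝓝 0)) (n : ℕ) : c0OfTendsto g hg n = g n := rfl

lemma c0_tendsto_zero {E : Type*} [TopologicalSpace E] [Zero E] (x : C₀(ℕ, E)) :
    Tendsto x atTop (𝓝 0) := by
  have h : Tendsto x (cocompact ℕ) (𝓝 0) := x.zero_at_infty'
  rwa [cocompact_eq_cofinite, Nat.cofinite_eq_atTop] at h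

lemma c0_exists_apply_zero_eq {E : Type*} [TopologicalSpace E] [Zero E] (a : E) :
    ∃ x : C₀(ℕ, E), x 0 = a := by
  refine ⟨c0OfTendsto (Pi.single 0 a) (tendsto_const_nhds.congr' ?_), by simp⟩
  filter_upwards [eventually_ne_atTop 0] with n hn
  rw [Pi.single_eq_of_ne hn]

variable {E : Type*} [SeminormedAddCommGroup E]

lemma c0_norm_apply_le (x : C₀(ℕ, E)) (n : ℕ) : ‖x n‖ ≤ ‖x‖ :=
  x.toBCF.norm_coe_le_norm n

lemma c0_norm_le {x : C₀(ℕ, E)} {C : ℝ} (hC : 0 ≤ C) (h : ∀ n, ‖x n‖ ≤ C) : ‖x‖ ≤ C :=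
  (BoundedContinuousFunction.norm_le (f := x.toBCF) hC).mpr h

lemma c0_continuous_apply (n : ℕ) : Continuous fun x : C₀(ℕ, E) => x n :=
  (LipschitzWith.of_dist_le_mul (K := 1) fun x y => by
    simpa [dist_eq_norm] using c0_norm_apply_le (x - y) n).continuous

lemma exists_finsupp_approx_c0 (E : Type*) [SeminormedAddCommGroup E]
    [TopologicalSpace.SeparableSpace E] :
    ∃ y : ℕ → ℕ →₀ E, ∀ (z : C₀(ℕ, E)), ∀ ε > 0, ∃ k, ∀ i, ‖y k i - z i‖ < ε := by
  obtain ⟨g, hg⟩ := exists_surjective_nat (ℕ →₀ ℕ)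
  let d : ℕ → E := fun a => a.casesOn 0 (TopologicalSpace.denseSeq E)
  refine ⟨fun k => (g k).mapRange d rfl, fun z ε hε => ?_⟩
  have happrox : ∀ i, ∃ a, ‖d a - z i‖ < ε := fun i => by
    obtain ⟨a, ha⟩ := (TopologicalSpace.denseRange_denseSeq E).exists_dist_lt (z i) hε
    exact ⟨a + 1, by rwa [← dist_eq_norm, dist_comm]⟩
  choose a ha using happrox
  have hsmall : ∀ᶠ i in atTop, ‖z i‖ < ε :=
    (tendsto_zero_iff_norm_tendsto_zero.mp (c0_tendsto_zero z)).eventually_lt_const hε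
  obtain ⟨K, hK⟩ := eventually_atTop.mp hsmall
  obtain ⟨k, hk⟩ := hg (Finsupp.onFinset (Finset.range K) (fun i => if i < K then a i else 0)
    fun i hi => by simp_all)
  refine ⟨k, fun i => ?_⟩
  simp only [hk, Finsupp.mapRange_apply, Finsupp.onFinset_apply]
  split_ifs with hi
  · exact ha i
  · simpa [d] using hK i (not_lt.mp hi)

end NullSequences

section WeightedShift

/-- The product `w 1 * ⋯ * w n`, which governs the `n`-th iterate of the weighted shift. -/
def weightProd {𝕜 : Type*} [CommMonoid 𝕜] (w : ℕ → 𝕜) (n : ℕ) : 𝕜 :=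
  ∏ i ∈ Finset.range n, w (i + 1)

@[simp]
lemma weightProd_zero {𝕜 : Type*} [CommMonoid 𝕜] (w : ℕ → 𝕜) : weightProd w 0 = 1 :=
  Finset.prod_range_zero _

lemma weightProd_succ {𝕜 : Type*} [CommMonoid 𝕜] (w : ℕ → 𝕜) (n : ℕ) :
    weightProd w (n + 1) = weightProd w n * w (n + 1) :=
  Finset.prod_range_succ _ n

variable {𝕜 : Type*}

section NormedField

variable [NormedField 𝕜] {w : ℕ → 𝕜}

lemma weightProd_ne_zero (hw : ∀ n, w n ≠ 0) (n : ℕ) : weightProd w n ≠ 0 :=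
  Finset.prod_ne_zero_iff.mpr fun i _ => hw (i + 1)

lemma norm_weightProd_add_le {C : ℝ} (hC : ∀ n, ‖w n‖ ≤ C) (n s : ℕ) :
    ‖weightProd w (n + s)‖ ≤ C ^ s * ‖weightProd w n‖ := by
  have hC0 : 0 ≤ C := (norm_nonneg _).trans (hC 0)
  induction s with
  | zero => simp
  | succ s ih =>
    rw [← add_assoc, weightProd_succ, norm_mul, pow_succ]
    calc _ ≤ C ^ s * ‖weightProd w n‖ * C := by gcongr; exact hC _
      _ = C ^ s * C * ‖weightProd w n‖ := by ring

lemma exists_frequently_norm_weightProd_le (hw : ∃ C, ∀ n, ‖w n‖ ≤ C) {M : ℝ}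
    (hM : ∃ᶠ n in atTop, ‖weightProd w n‖ ≤ M) {p : ℕ} (hp : 0 < p) (j : ℕ) :
    ∃ M', ∃ᶠ t in atTop, ‖weightProd w (j + p * t)‖ ≤ M' := by
  obtain ⟨C, hC⟩ := hw
  refine ⟨(max C 1) ^ p * M, frequently_atTop.mpr fun T => ?_⟩
  obtain ⟨n, hn, hnM⟩ := frequently_atTop.mp hM (j + p * T)
  have hmod := Nat.div_add_mod (n - j) p
  have hlt := Nat.mod_lt (n - j) hp
  have hT : T ≤ (n - j) / p := (Nat.le_div_iff_mul_le hp).mpr (by rw [mul_comm]; omega)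
  have hsplit : j + p * ((n - j) / p + 1) = n + (p - (n - j) % p) := by
    rw [mul_add]; omega
  refine ⟨(n - j) / p + 1, by omega, ?_⟩
  rw [hsplit]
  calc _ ≤ (max C 1) ^ (p - (n - j) % p) * ‖weightProd w n‖ :=
        norm_weightProd_add_le (fun n => (hC n).trans (le_max_left C 1)) n _
    _ ≤ (max C 1) ^ p * M := by
        gcongr
        · exact le_max_right C 1
        · exact Nat.sub_le p _

/-- The weighted backward shift `B_w` on `c₀`. Only the weights `w n` with `n ≥ 1` enter. -/
noncomputable def weightedShift (w : ℕ → 𝕜) (hw : ∃ C, ∀ n, ‖w n‖ ≤ C) :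
    C₀(ℕ, 𝕜) →L[𝕜] C₀(ℕ, 𝕜) :=
  LinearMap.mkContinuousOfExistsBound
    { toFun := fun x => c0OfTendsto (fun n => w (n + 1) * x (n + 1)) <| by
        obtain ⟨C, hC⟩ := hw
        refine squeeze_zero_norm (a := fun n => C * ‖x (n + 1)‖) (fun n => ?_) ?_
        · rw [norm_mul]; gcongr; exact hC _
        · simpa using
            ((tendsto_add_atTop_iff_nat 1).mpr (c0_tendsto_zero x)).norm.const_mul C
      map_add' := fun x y => by
        ext n; exact mul_add (w (n + 1)) (x (n + 1)) (y (n + 1))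
      map_smul' := fun c x => by
        ext n; exact mul_left_comm (w (n + 1)) c (x (n + 1)) } <| by
    obtain ⟨C, hC⟩ := hw
    have hC0 : 0 ≤ C := (norm_nonneg _).trans (hC 0)
    refine ⟨C, fun x => c0_norm_le (by positivity) fun n => ?_⟩
    exact (norm_mul_le _ _).trans (by gcongr; exacts [hC _, c0_norm_apply_le x _])

variable (hw : ∃ C, ∀ n, ‖w n‖ ≤ C)

lemma weightedShift_apply (x : C₀(ℕ, 𝕜)) (n : ℕ) :
    weightedShift w hw x n = w (n + 1) * x (n + 1) := rfl

lemma weightProd_mul_weightedShift_iterate (m : ℕ) (x : C₀(ℕ, 𝕜)) (n : ℕ) :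
    weightProd w n * (weightedShift w hw)^[m] x n = weightProd w (n + m) * x (n + m) := by
  induction m generalizing n with
  | zero => rfl
  | succ m ih =>
    rw [Function.iterate_succ_apply', weightedShift_apply, ← mul_assoc, ← weightProd_succ, ih,
      add_right_comm, add_assoc]

lemma eq_zero_of_weightedShift_iterate_eq_smul (hw0 : ∀ n, w n ≠ 0) {M : ℝ}
    (hM : ∃ᶠ n in atTop, ‖weightProd w n‖ ≤ M) {p : ℕ} (hp : 0 < p) {c : 𝕜} (hc : ‖c‖ = 1)
    {x : C₀(ℕ, 𝕜)} (hx : (weightedShift w hw)^[p] x = c • x) : x = 0 := by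
  have hcomm : ∀ (a : 𝕜) (y : C₀(ℕ, 𝕜)),
      (weightedShift w hw)^[p] (a • y) = a • (weightedShift w hw)^[p] y := fun a =>
    Function.Commute.iterate_left (map_smul (weightedShift w hw) a) p
  have hiter : ∀ t, (weightedShift w hw)^[p * t] x = c ^ t • x := fun t => by
    induction t with
    | zero => simp
    | succ t ih =>
      rw [mul_add_one, add_comm, Function.iterate_add_apply, ih, hcomm, hx, smul_smul, pow_succ]
  ext j
  have hnorm : ∀ t, ‖weightProd w (j + p * t)‖ * ‖x (j + p * t)‖ = ‖weightProd w j‖ * ‖x j‖ :=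
    fun t => by
      rw [← norm_mul, ← weightProd_mul_weightedShift_iterate hw, hiter,
        ZeroAtInftyContinuousMap.smul_apply, norm_mul, norm_smul, norm_pow, hc, one_pow, one_mul]
  obtain ⟨M', hM'⟩ := exists_frequently_norm_weightProd_le hw hM hp j
  have hsubseq : Tendsto (fun t => M' * ‖x (j + p * t)‖) atTop (𝓝 0) := by
    have htop : Tendsto (fun t => j + p * t) atTop atTop :=
      tendsto_atTop_mono (fun t => (Nat.le_mul_of_pos_left t hp).trans le_add_self) tendsto_id
    simpa using ((c0_tendsto_zero x).comp htop).norm.const_mul M'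
  have hle : ‖weightProd w j‖ * ‖x j‖ ≤ 0 := ge_of_tendsto_of_frequently hsubseq <|
    hM'.mono fun t ht => by rw [← hnorm t]; gcongr
  have hpos : 0 < ‖weightProd w j‖ := norm_pos_iff.mpr (weightProd_ne_zero hw0 j)
  exact norm_le_zero_iff.mp (nonpos_of_mul_nonpos_right hle hpos)

lemma not_exists_unimodular_eigenvalue_weightedShift (hw0 : ∀ n, w n ≠ 0) {M : ℝ}
    (hM : ∃ᶠ n in atTop, ‖weightProd w n‖ ≤ M) :
    ¬ ∃ (c : 𝕜) (x : C₀(ℕ, 𝕜)), ‖c‖ = 1 ∧ x ≠ 0 ∧ weightedShift w hw x = c • x := by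
  rintro ⟨c, x, hc, hx0, hx⟩
  exact hx0 (eq_zero_of_weightedShift_iterate_eq_smul hw hw0 hM one_pos hc hx)

lemma not_dense_periodicPts_weightedShift (hw0 : ∀ n, w n ≠ 0) {M : ℝ}
    (hM : ∃ᶠ n in atTop, ‖weightProd w n‖ ≤ M) :
    ¬ Dense {x : C₀(ℕ, 𝕜) | ∃ n, 0 < n ∧ (weightedShift w hw)^[n] x = x} := by
  intro hdense
  obtain ⟨y, hy⟩ := c0_exists_apply_zero_eq (1 : 𝕜)
  obtain ⟨x, hx0, p, hp, hx⟩ := hdense.inter_open_nonempty {x | x 0 ≠ 0}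
    (isOpen_ne_fun (c0_continuous_apply 0) continuous_const) ⟨y, by simp [hy]⟩
  have hzero : x = 0 := eq_zero_of_weightedShift_iterate_eq_smul hw hw0 hM hp norm_one
    (hx.trans (one_smul 𝕜 x).symm)
  exact hx0 (by simp [hzero])

end NormedField

lemma not_topologicallyMixing_weightedShift [NontriviallyNormedField 𝕜] {w : ℕ → 𝕜}
    (hw : ∃ C, ∀ n, ‖w n‖ ≤ C) {M : ℝ} (hM : ∃ᶠ n in atTop, ‖weightProd w n‖ ≤ M) :
    ¬ ∀ U V : Set C₀(ℕ, 𝕜), IsOpen U → U.Nonempty → IsOpen V → V.Nonempty →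
      ∃ N : ℕ, ∀ n ≥ N, ((fun z => (weightedShift w hw)^[n] z) '' U ∩ V).Nonempty := by
  intro hmix
  obtain ⟨a, ha⟩ := NormedField.exists_lt_norm 𝕜 M
  obtain ⟨v, hv⟩ := c0_exists_apply_zero_eq a
  obtain ⟨N, hN⟩ := hmix (Metric.ball 0 1) {y | M < ‖y 0‖} Metric.isOpen_ball
    ⟨0, Metric.mem_ball_self one_pos⟩
    (isOpen_lt continuous_const (c0_continuous_apply 0).norm) ⟨v, by simpa [hv] using ha⟩
  obtain ⟨n, hn, hnM⟩ := frequently_atTop.mp hM N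
  obtain ⟨_, ⟨z, hz, rfl⟩, hMz⟩ := hN n hn
  have hzn : ‖z n‖ ≤ 1 := (c0_norm_apply_le z n).trans (mem_ball_zero_iff.mp hz).le
  have hiter : (weightedShift w hw)^[n] z 0 = weightProd w n * z n := by
    simpa using weightProd_mul_weightedShift_iterate hw n z 0
  refine (show M < ‖(weightedShift w hw)^[n] z 0‖ from hMz).not_ge ?_
  calc ‖(weightedShift w hw)^[n] z 0‖ = ‖weightProd w n‖ * ‖z n‖ := by rw [hiter, norm_mul]
    _ ≤ ‖weightProd w n‖ := mul_le_of_le_one_right (norm_nonneg _) hzn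
    _ ≤ M := hnM

end WeightedShift

section VeryFrequentHypercyclicity

/-- Very frequent hypercyclicity of `T`: some orbit meets every nonempty open set `U` along a set
`A` of times for which the lower density of `⋃ n ≤ N, (A - n)` tends to `1` as `N → ∞`. -/
def VeryFrequentlyHypercyclic {X : Type*} [TopologicalSpace X] (T : X → X) : Prop :=
  ∃ x, ∀ U : Set X, IsOpen U → U.Nonempty →
    Tendsto (fun N : ℕ => lowerDensity {m : ℕ | ∃ n ≤ N, T^[m + n] x ∈ U}) atTop (𝓝 1)

lemma VeryFrequentlyHypercyclic.of_approx {X : Type*} [PseudoMetricSpace X] {T : X → X} {x : X}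
    {E : ℕ → Set ℕ} {δ : ℕ → ℝ} (hδ : Tendsto δ atTop (𝓝 0))
    (hE : ∀ q, ∃ R, 1 - δ q ≤ lowerDensity {m | ∃ n ≤ R, m + n ∈ E q})
    (happrox : ∀ z, ∀ ε > 0, ∀ q₀, ∃ q ≥ q₀, ∀ m ∈ E q, dist (T^[m] x) z < ε) :
    VeryFrequentlyHypercyclic T := by
  refine ⟨x, fun U hU ⟨z, hz⟩ => tendsto_lowerDensity_one_of_monotone
    (fun N N' hN m ⟨n, hn, hm⟩ => ⟨n, hn.trans hN, hm⟩) fun c hc => ?_⟩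
  obtain ⟨ε, hε, hball⟩ := Metric.isOpen_iff.mp hU z hz
  obtain ⟨q₀, hq₀⟩ := eventually_atTop.mp (hδ.eventually_lt_const (sub_pos.mpr hc))
  obtain ⟨q, hq, hvisit⟩ := happrox z ε hε q₀
  obtain ⟨R, hR⟩ := hE q
  refine ⟨R, (by linarith [hq₀ q hq] : c < 1 - δ q).trans_le (hR.trans (lowerDensity_mono ?_))⟩
  rintro m ⟨n, hn, hm⟩
  exact ⟨n, hn, hball (hvisit (m + n) hm)⟩

/-- A family of sets `E p` of visiting times adapted to the moduli `P n` of the weight products.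
A vector of `c₀` can carry, at each `n ∈ E p`, a block of length `p` and size at most `2 ^ p`:
blocks do not overlap, all the other blocks seen from a visit are small relative to `P`, and the
family is dense enough to make the visits very frequent. -/
structure IsVisitingFamily (P : ℕ → ℝ) (E : ℕ → Set ℕ) : Prop where
  block_unique : ∀ {p q n m i i' : ℕ}, n ∈ E p → m ∈ E q → i < p → i' < q →
    n + i = m + i' → p = q ∧ n = m
  separated : ∀ {p q n m i j : ℕ}, n ∈ E p → m ∈ E q → i < p → q ≤ j →
    j + m = n + i → 2 ^ (p + q) ≤ P j
  decay : ∀ K : ℕ, ∀ᶠ j in atTop, ∀ p n i, n ∈ E p → i < p → j = n + i → 2 ^ (p + K) ≤ P j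
  dense : ∀ q, ∃ R, 1 - (1 / 2) ^ q ≤ lowerDensity {m | ∃ n ≤ R, m + n ∈ E q}

/-- The index of an entry of a sequence made of blocks: the block of some `length` starting at
some `start ∈ E length`, and an `offset` inside that block. -/
structure BlockIndex (E : ℕ → Set ℕ) where
  length : ℕ
  start : ℕ
  offset : ℕ
  start_mem : start ∈ E length
  offset_lt : offset < length

/-- The position in the sequence of the entry with a given block index. -/
def BlockIndex.position {E : ℕ → Set ℕ} (s : BlockIndex E) : ℕ := s.start + s.offset

/-- The sequence having, for every `p` and every `n ∈ E p`, the block `v p 0, …, v p (p - 1)`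
starting at position `n`, and zeros elsewhere. -/
noncomputable def blockSeq {F : Type*} [Zero F] (E : ℕ → Set ℕ) (v : ℕ → ℕ → F) : ℕ → F :=
  Function.extend BlockIndex.position (fun s : BlockIndex E => v s.length s.offset) 0

namespace IsVisitingFamily

variable {P : ℕ → ℝ} {E : ℕ → Set ℕ}

lemma position_injective (hE : IsVisitingFamily P E) :
    Function.Injective (BlockIndex.position (E := E)) := by
  rintro ⟨p, n, i, hn, hi⟩ ⟨q, m, i', hm, hi'⟩ h
  obtain ⟨rfl, rfl⟩ := hE.block_unique hn hm hi hi' h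
  obtain rfl : i = i' := Nat.add_left_cancel h
  rfl

variable {F : Type*}

lemma blockSeq_add [Zero F] (hE : IsVisitingFamily P E) (v : ℕ → ℕ → F) {p n i : ℕ}
    (hn : n ∈ E p) (hi : i < p) : blockSeq E v (n + i) = v p i :=
  hE.position_injective.extend_apply _ _ (⟨p, n, i, hn, hi⟩ : BlockIndex E)

variable [SeminormedAddCommGroup F] {v : ℕ → ℕ → F}

lemma norm_blockSeq_le (hE : IsVisitingFamily P E) (hv : ∀ p i, ‖v p i‖ ≤ 2 ^ p) {K j : ℕ}
    {r : ℝ} (hr : 0 ≤ r) (hj : ∀ p n i, n ∈ E p → i < p → j = n + i → 2 ^ (p + K) ≤ r) :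
    ‖blockSeq E v j‖ ≤ (1 / 2) ^ K * r := by
  by_cases hs : ∃ s : BlockIndex E, s.position = j
  · obtain ⟨⟨p, n, i, hn, hi⟩, rfl⟩ := hs
    calc ‖blockSeq E v (n + i)‖ ≤ 2 ^ p := by rw [hE.blockSeq_add v hn hi]; exact hv p i
      _ = (1 / 2) ^ K * 2 ^ (p + K) := by rw [pow_add, one_div, inv_pow]; field_simp
      _ ≤ (1 / 2) ^ K * r := by gcongr; exact hj p n i hn hi rfl
  · rw [blockSeq, Function.extend_apply' _ _ _ hs, Pi.zero_apply, norm_zero]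
    positivity

lemma norm_blockSeq_add_sub_le (hE : IsVisitingFamily P E) (hP : ∀ j, 0 ≤ P j)
    (hv : ∀ p i, ‖v p i‖ ≤ 2 ^ p) (hv0 : ∀ p i, p ≤ i → v p i = 0) {q m : ℕ} (hm : m ∈ E q)
    (j : ℕ) : ‖blockSeq E v (j + m) - v q j‖ ≤ (1 / 2) ^ q * P j := by
  rcases lt_or_ge j q with hj | hj
  · rw [add_comm j, hE.blockSeq_add v hm hj, sub_self, norm_zero]
    exact mul_nonneg (by positivity) (hP j)
  · rw [hv0 q j hj, sub_zero]
    exact hE.norm_blockSeq_le hv (hP j) fun p n i hn hi h => hE.separated hn hm hi hj h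

end IsVisitingFamily

section NormedField

variable {𝕜 : Type*} [NormedField 𝕜] {W : ℕ → 𝕜} {E : ℕ → Set ℕ} {v : ℕ → ℕ → 𝕜}

lemma IsVisitingFamily.tendsto_blockSeq_div (hE : IsVisitingFamily (fun n => ‖W n‖) E)
    (hW : ∀ n, W n ≠ 0) (hv : ∀ p i, ‖v p i‖ ≤ 2 ^ p) :
    Tendsto (fun j => blockSeq E v j / W j) atTop (𝓝 0) := by
  refine tendsto_zero_iff_norm_tendsto_zero.mpr (tendsto_order.mpr
    ⟨fun c hc => .of_forall fun j => hc.trans_le (norm_nonneg _), fun c hc => ?_⟩)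
  obtain ⟨K, hK⟩ := exists_pow_lt_of_lt_one hc (one_half_lt_one (α := ℝ))
  filter_upwards [hE.decay K] with j hj
  rw [norm_div, div_lt_iff₀ (norm_pos_iff.mpr (hW j))]
  calc ‖blockSeq E v j‖ ≤ (1 / 2) ^ K * ‖W j‖ := hE.norm_blockSeq_le hv (norm_nonneg _) hj
    _ < c * ‖W j‖ := by gcongr; exact norm_pos_iff.mpr (hW j)

lemma eventually_pow_two_bound_finsupp (W : ℕ → 𝕜) (y : ℕ →₀ 𝕜) :
    ∀ᶠ N in atTop, (∀ i, ‖W i * y i‖ ≤ 2 ^ N) ∧ ∀ i ≥ N, W i * y i = 0 := by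
  obtain ⟨K, hK⟩ := y.support.exists_nat_subset_range
  have hzero : ∀ i ≥ K, y i = 0 := fun i hi => Finsupp.notMem_support_iff.mp fun h =>
    (Finset.mem_range.mp (hK h)).not_ge hi
  have hpow : ∀ i ∈ Finset.range K, ∀ᶠ N in atTop, ‖W i * y i‖ ≤ (2 : ℝ) ^ N := fun i _ =>
    (tendsto_pow_atTop_atTop_of_one_lt one_lt_two).eventually_ge_atTop _
  filter_upwards [eventually_ge_atTop K, (Filter.eventually_all_finset _).mpr hpow]
    with N hN hbound
  refine ⟨fun i => ?_, fun i hi => by rw [hzero i (hN.trans hi), mul_zero]⟩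
  rcases lt_or_ge i K with hi | hi
  · exact hbound i (Finset.mem_range.mpr hi)
  · rw [hzero i hi, mul_zero, norm_zero]; positivity

lemma exists_blockValues [TopologicalSpace.SeparableSpace 𝕜] (hW : ∀ n, W n ≠ 0) :
    ∃ v : ℕ → ℕ → 𝕜, (∀ p i, ‖v p i‖ ≤ 2 ^ p) ∧ (∀ p i, p ≤ i → v p i = 0) ∧
      ∀ z : C₀(ℕ, 𝕜), ∀ ε > 0, ∀ q₀, ∃ q ≥ q₀, ∀ i, ‖v q i / W i - z i‖ < ε := by
  obtain ⟨y, hy⟩ := exists_finsupp_approx_c0 𝕜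
  let a : ℕ → ℕ → 𝕜 := fun p i => W i * y p.unpair.1 i
  let Admissible : ℕ → Prop := fun p => (∀ i, ‖a p i‖ ≤ 2 ^ p) ∧ ∀ i ≥ p, a p i = 0
  refine ⟨fun p => if Admissible p then a p else 0, fun p i => ?_, fun p i hi => ?_,
    fun z ε hε q₀ => ?_⟩
  · dsimp only
    split_ifs with hp
    · exact hp.1 i
    · simp
  · dsimp only
    split_ifs with hp
    · exact hp.2 i hi
    · rfl
  · obtain ⟨k, hk⟩ := hy z ε hε
    have hpair : Tendsto (Nat.pair k) atTop atTop :=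
      tendsto_atTop_mono (fun N => Nat.right_le_pair k N) tendsto_id
    obtain ⟨N, hN, hq⟩ := ((hpair.eventually (eventually_pow_two_bound_finsupp W (y k))).and
      (hpair.eventually_ge_atTop q₀)).exists
    have hadm : Admissible (Nat.pair k N) := by simpa only [Admissible, a, Nat.unpair_pair] using hN
    refine ⟨Nat.pair k N, hq, fun i => ?_⟩
    simpa [hadm, a, mul_div_cancel_left₀ _ (hW i)] using hk i

theorem IsVisitingFamily.veryFrequentlyHypercyclic_weightedShift [TopologicalSpace.SeparableSpace 𝕜]
    {w : ℕ → 𝕜} (hw : ∃ C, ∀ n, ‖w n‖ ≤ C) (hw0 : ∀ n, w n ≠ 0)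
    (hE : IsVisitingFamily (fun n => ‖weightProd w n‖) E) :
    VeryFrequentlyHypercyclic (weightedShift w hw) := by
  have hP := weightProd_ne_zero hw0
  obtain ⟨v, hv, hv0, happrox⟩ := exists_blockValues hP
  let x := c0OfTendsto _ (hE.tendsto_blockSeq_div hP hv)
  have hδ := tendsto_pow_atTop_nhds_zero_of_lt_one one_half_pos.le (one_half_lt_one (α := ℝ))
  refine .of_approx (x := x) hδ hE.dense fun z ε hε q₀ => ?_
  obtain ⟨q₁, hq₁⟩ := eventually_atTop.mp (hδ.eventually_lt_const (half_pos (half_pos hε)))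
  obtain ⟨q, hq, hvz⟩ := happrox z (ε / 2) (half_pos hε) (max q₀ q₁)
  refine ⟨q, (le_max_left _ _).trans hq, fun m hm => ?_⟩
  suffices h : ∀ j, ‖((weightedShift w hw)^[m] x - z) j‖ ≤ ε / 4 + ε / 2 by
    rw [dist_eq_norm]
    exact (c0_norm_le (by positivity) h).trans_lt (by linarith)
  intro j
  have hiter : (weightedShift w hw)^[m] x j = blockSeq E v (j + m) / weightProd w j := by
    rw [eq_div_iff (hP j), mul_comm, weightProd_mul_weightedShift_iterate, c0OfTendsto_apply,
      mul_div_cancel₀ _ (hP (j + m))]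
  calc ‖(weightedShift w hw)^[m] x j - z j‖
      = ‖(blockSeq E v (j + m) - v q j) / weightProd w j + (v q j / weightProd w j - z j)‖ := by
        rw [hiter]; ring_nf
    _ ≤ (1 / 2) ^ q + ε / 2 := by
        refine (norm_add_le _ _).trans (add_le_add ?_ (hvz j).le)
        rw [norm_div, div_le_iff₀ (norm_pos_iff.mpr (hP j))]
        exact hE.norm_blockSeq_add_sub_le (fun _ => norm_nonneg _) hv hv0 hm j
    _ ≤ ε / 4 + ε / 2 := by
        gcongr
        exact (hq₁ q ((le_max_right _ _).trans hq)).le.trans_eq (by ring)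

end NormedField

end VeryFrequentHypercyclicity

section PowerWeights

variable {𝕜 : Type*} [NormedField 𝕜]

/-- The weights `a ^ (f n - f (n - 1))`, whose products are powers of `a` with the exponents `f`
when `f 0 = 0`. Truncated subtraction makes the weight at `0` equal to `1`. -/
def powerWeight (a : 𝕜) (f : ℕ → ℕ) (n : ℕ) : 𝕜 := a ^ f n / a ^ f (n - 1)

variable {a : 𝕜} {f : ℕ → ℕ}

lemma powerWeight_ne_zero (ha : a ≠ 0) (n : ℕ) : powerWeight a f n ≠ 0 :=
  div_ne_zero (pow_ne_zero _ ha) (pow_ne_zero _ ha)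

lemma weightProd_powerWeight (ha : a ≠ 0) (hf0 : f 0 = 0) (n : ℕ) :
    weightProd (powerWeight a f) n = a ^ f n := by
  induction n with
  | zero => simp [hf0]
  | succ n ih =>
    rw [weightProd_succ, ih, powerWeight, Nat.add_sub_cancel,
      mul_div_cancel₀ _ (pow_ne_zero _ ha)]

lemma norm_powerWeight_le (ha : 1 ≤ ‖a‖) (hf : ∀ n, f (n + 1) ≤ f n + 1) (n : ℕ) :
    ‖powerWeight a f n‖ ≤ ‖a‖ := by
  rw [powerWeight, norm_div, norm_pow, norm_pow, div_le_iff₀ (pow_pos (one_pos.trans_le ha) _),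
    ← pow_succ']
  refine pow_le_pow_right₀ ha ?_
  cases n with
  | zero => exact Nat.le_succ _
  | succ n => exact hf n

end PowerWeights

section Age

/-- The age at time `n` of the renewal process with renewal times `S`: the time elapsed since the
last element of `S`, or since time `0`. -/
noncomputable def age (S : Set ℕ) : ℕ → ℕ
  | 0 => 0
  | n + 1 => if n + 1 ∈ S then 0 else age S n + 1

variable {S : Set ℕ}

lemma age_eq_zero {n : ℕ} (hn : n ∈ S) : age S n = 0 := by
  cases n with
  | zero => rfl
  | succ n => exact if_pos hn

lemma age_succ_le (S : Set ℕ) (n : ℕ) : age S (n + 1) ≤ age S n + 1 := by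
  rw [age]; split_ifs <;> simp

lemma age_le_sub {s n : ℕ} (hs : s ∈ S) (hsn : s ≤ n) : age S n ≤ n - s := by
  induction n, hsn using Nat.le_induction with
  | base => simp [age_eq_zero hs]
  | succ n hsn ih => have := age_succ_le S n; omega

lemma exists_mem_add_age_eq (h0 : 0 ∈ S) (n : ℕ) : ∃ s ∈ S, s + age S n = n := by
  induction n with
  | zero => exact ⟨0, h0, rfl⟩
  | succ n ih =>
    obtain ⟨s, hs, hsn⟩ := ih
    rw [age]
    split_ifs with hn
    exacts [⟨n + 1, hn, rfl⟩, ⟨s, hs, by omega⟩]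

end Age

section VisitTimes

/-- A rapidly growing scale: visits of level `p` are about `8 * visitScale p` apart. The exponent
is chosen so that `∑ p > q, visitScale q * p ^ 2 / visitScale p` is tiny for every `q`. -/
def visitScale (p : ℕ) : ℕ := 2 ^ (13 * p ^ 2)

/-- The times at which the weight products return to `1`. -/
def resetTime (k : ℕ) : ℕ := ∑ j ∈ Finset.range k, visitScale (j + 1)

lemma visitScale_pos (p : ℕ) : 0 < visitScale p := Nat.two_pow_pos _

lemma eight_mul_visitScale_dvd {p k : ℕ} (h : p < k) : 8 * visitScale p ∣ visitScale k := by
  rw [visitScale, visitScale, show 8 = 2 ^ 3 from rfl, ← pow_add]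
  exact pow_dvd_pow 2 (by nlinarith)

lemma eight_mul_visitScale_le {p k : ℕ} (h : p < k) : 8 * visitScale p ≤ visitScale k :=
  Nat.le_of_dvd (visitScale_pos k) (eight_mul_visitScale_dvd h)

lemma eight_mul_le_visitScale (p : ℕ) : 8 * p ≤ visitScale p := by
  induction p with
  | zero => simp
  | succ p ih =>
    have := eight_mul_visitScale_le p.lt_add_one
    have := visitScale_pos p
    omega

lemma resetTime_succ (k : ℕ) : resetTime (k + 1) = resetTime k + visitScale (k + 1) :=
  Finset.sum_range_succ _ k

lemma resetTime_strictMono : StrictMono resetTime := strictMono_nat_of_lt_succ fun k => by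
  rw [resetTime_succ]; exact Nat.lt_add_of_pos_right (visitScale_pos _)

lemma resetTime_le (p : ℕ) : resetTime p ≤ 2 * visitScale p := by
  induction p with
  | zero => simp [resetTime]
  | succ p ih =>
    have := eight_mul_visitScale_le p.lt_add_one
    rw [resetTime_succ]
    omega

lemma visitScale_le_resetTime {p : ℕ} (hp : 0 < p) : visitScale p ≤ resetTime p := by
  obtain ⟨p, rfl⟩ := Nat.exists_eq_add_one_of_ne_zero hp.ne'
  rw [resetTime_succ]
  exact Nat.le_add_left _ _

lemma resetTime_modEq {p k : ℕ} (h : p ≤ k) :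
    (resetTime k : ℤ) ≡ resetTime p [ZMOD 8 * visitScale p] := by
  induction k, h using Nat.le_induction with
  | base => rfl
  | succ k hk ih =>
    have hdvd : (8 * visitScale p : ℤ) ∣ visitScale (k + 1) := by
      exact_mod_cast eight_mul_visitScale_dvd (Nat.lt_succ_of_le hk)
    rw [resetTime_succ, Nat.cast_add]
    simpa using ih.add (Int.modEq_zero_iff_dvd.mpr hdvd)

lemma resetTime_modEq_min (p k : ℕ) :
    (resetTime k : ℤ) ≡ resetTime (min k p) [ZMOD 8 * visitScale p] := by
  rcases le_total k p with h | h
  · rw [min_eq_left h]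
  · rw [min_eq_right h]; exact resetTime_modEq h

/-- The residues modulo `8 * visitScale p` that visits of levels below `p` have to avoid: those of
the visits of level `p` moved forwards or backwards by a reset time, and that of the later reset
times. -/
def forbiddenCenters (p : ℕ) : Finset ℤ :=
  (Finset.range (p + 1)).image (fun j => 4 * (visitScale p : ℤ) + resetTime j) ∪
    (Finset.range (p + 1)).image (fun j => 4 * (visitScale p : ℤ) - resetTime j) ∪
    {(resetTime p : ℤ)}

/-- The times within `2 * p` of the residue classes of `forbiddenCenters p`. -/
def forbiddenTimes (p : ℕ) : Set ℕ :=
  {n | ∃ c ∈ forbiddenCenters p, ∃ d ∈ Finset.Icc (-2 * p : ℤ) (2 * p),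
    (n : ℤ) ≡ c + d [ZMOD 8 * visitScale p]}

/-- The visiting times of level `q`: one residue class modulo `8 * visitScale q`, from which the
times that would interfere with higher levels have been removed. -/
def visitTimes (q : ℕ) : Set ℕ :=
  {n | (n : ℤ) ≡ 4 * visitScale q [ZMOD 8 * visitScale q] ∧ ∀ p > q, n ∉ forbiddenTimes p}

lemma mem_forbiddenTimes_of_abs_sub_le {p n : ℕ} {c y : ℤ} (hc : c ∈ forbiddenCenters p)
    (hy : y ≡ c [ZMOD 8 * visitScale p]) (h : |(n : ℤ) - y| ≤ 2 * p) : n ∈ forbiddenTimes p := by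
  refine ⟨c, hc, n - y, ?_, ?_⟩
  · rw [Finset.mem_Icc, neg_mul]; exact abs_le.mp h
  · simpa using hy.add_right ((n : ℤ) - y)

lemma add_resetTime_mem_forbiddenCenters {p j : ℕ} (hj : j ≤ p) :
    4 * (visitScale p : ℤ) + resetTime j ∈ forbiddenCenters p :=
  Finset.mem_union_left _ (Finset.mem_union_left _
    (Finset.mem_image_of_mem _ (Finset.mem_range_succ_iff.mpr hj)))

lemma sub_resetTime_mem_forbiddenCenters {p j : ℕ} (hj : j ≤ p) :
    4 * (visitScale p : ℤ) - resetTime j ∈ forbiddenCenters p :=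
  Finset.mem_union_left _ (Finset.mem_union_right _
    (Finset.mem_image_of_mem _ (Finset.mem_range_succ_iff.mpr hj)))

lemma resetTime_mem_forbiddenCenters (p : ℕ) : (resetTime p : ℤ) ∈ forbiddenCenters p :=
  Finset.mem_union_right _ (Finset.mem_singleton_self _)

lemma forbiddenCenters_bounds {p : ℕ} (hp : 0 < p) {c : ℤ} (hc : c ∈ forbiddenCenters p) :
    (visitScale p : ℤ) ≤ c ∧ c ≤ 6 * visitScale p := by
  have hle : ∀ j ≤ p, resetTime j ≤ 2 * visitScale p := fun j hj =>
    (resetTime_strictMono.monotone hj).trans (resetTime_le p)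
  have hge := visitScale_le_resetTime hp
  have hlep := resetTime_le p
  simp only [forbiddenCenters, Finset.mem_union, Finset.mem_image, Finset.mem_range_succ_iff,
    Finset.mem_singleton] at hc
  rcases hc with (⟨j, hj, rfl⟩ | ⟨j, hj, rfl⟩) | rfl
  · have := hle j hj; omega
  · have := hle j hj; omega
  · omega

lemma card_forbiddenCenters_le (p : ℕ) : (forbiddenCenters p).card ≤ 2 * p + 3 := by
  have himage : ∀ g : ℕ → ℤ, ((Finset.range (p + 1)).image g).card ≤ p + 1 := fun g =>
    Finset.card_image_le.trans (Finset.card_range _).le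
  calc (forbiddenCenters p).card ≤ (p + 1) + (p + 1) + 1 :=
        (Finset.card_union_le _ _).trans (add_le_add ((Finset.card_union_le _ _).trans
          (add_le_add (himage _) (himage _))) (Finset.card_singleton _).le)
    _ = 2 * p + 3 := by ring

lemma visitScale_le_of_mem_forbiddenTimes {p n : ℕ} (hp : 0 < p) (hn : n ∈ forbiddenTimes p) :
    visitScale p ≤ 2 * n := by
  obtain ⟨c, hc, d, hd, hcd⟩ := hn
  obtain ⟨hc₁, hc₂⟩ := forbiddenCenters_bounds hp hc
  have hQ := eight_mul_le_visitScale p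
  rw [Finset.mem_Icc] at hd
  by_contra! hlt
  have := Int.le_of_dvd (by omega) hcd.dvd
  omega

lemma partialDensity_forbiddenTimes_le {p : ℕ} (hp : 0 < p) (N : ℕ) :
    partialDensity (forbiddenTimes p) N ≤ 3 * ((2 * p + 3) * (4 * p + 1)) / visitScale p := by
  have hQ : (0 : ℝ) < visitScale p := by exact_mod_cast visitScale_pos p
  let R : Finset ℤ := Finset.image₂ (· + ·) (forbiddenCenters p) (Finset.Icc (-2 * p) (2 * p))
  have hR : (R.card : ℝ) ≤ (2 * p + 3) * (4 * p + 1) := by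
    have hcard : R.card ≤ (2 * p + 3) * (4 * p + 1) := by
      refine (Finset.card_image₂_le _ _ _).trans (Nat.mul_le_mul (card_forbiddenCenters_le p) ?_)
      rw [Int.card_Icc]; omega
    exact_mod_cast hcard
  calc partialDensity (forbiddenTimes p) N
      ≤ R.card * (1 / (8 * visitScale p : ℕ) + 1 / (visitScale p / 2)) := by
        refine partialDensity_le_of_residues (mul_pos (by norm_num) (visitScale_pos p)) R ?_
          (half_pos hQ) ?_ N
        · rintro n ⟨c, hc, d, hd, hn⟩
          exact ⟨c + d, Finset.mem_image₂_of_mem hc hd, by exact_mod_cast hn⟩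
        · intro n hn
          have : (visitScale p : ℝ) ≤ 2 * n := by
            exact_mod_cast visitScale_le_of_mem_forbiddenTimes hp hn
          linarith
    _ = R.card * (17 / 8) / visitScale p := by push_cast; field_simp; norm_num
    _ ≤ 3 * ((2 * p + 3) * (4 * p + 1)) / visitScale p := by
        refine div_le_div_of_nonneg_right ?_ hQ.le
        linarith [R.card.cast_nonneg (α := ℝ)]

lemma two_mul_max_lt_abs_sub_of_mem_visitTimes {p q n m : ℕ} (hp : 0 < p) (hn : n ∈ visitTimes p)
    (hm : m ∈ visitTimes q) (hne : ¬ (p = q ∧ n = m)) (k : ℕ) :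
    2 * (max p q : ℤ) < |(n : ℤ) - m - resetTime k| := by
  by_contra! hle
  rcases lt_trichotomy p q with hpq | rfl | hpq
  · rw [max_eq_right (by exact_mod_cast hpq.le)] at hle
    refine hn.2 q hpq (mem_forbiddenTimes_of_abs_sub_le
      (add_resetTime_mem_forbiddenCenters (min_le_right k q))
      (hm.1.add (resetTime_modEq_min q k)) ?_)
    rwa [← sub_sub]
  · have hdvd : (8 * visitScale p : ℤ) ∣ n - m - resetTime k + resetTime (min k p) := by
      have h := (hm.1.trans hn.1.symm).dvd.add (resetTime_modEq_min p k).dvd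
      rwa [← add_sub_assoc, add_sub_right_comm] at h
    have hbound : (resetTime (min k p) : ℤ) ≤ 2 * visitScale p := by
      exact_mod_cast (resetTime_strictMono.monotone (min_le_right k p)).trans (resetTime_le p)
    have hQ := eight_mul_le_visitScale p
    rw [max_self, abs_le] at hle
    have hzero := Int.eq_zero_of_abs_lt_dvd hdvd (by rw [abs_lt]; omega)
    rcases le_total k p with hk | hk
    · rw [min_eq_left hk] at hzero
      exact hne ⟨rfl, by omega⟩
    · have := visitScale_le_resetTime hp
      rw [min_eq_right hk] at hzero
      omega
  · rw [max_eq_left (by exact_mod_cast hpq.le)] at hle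
    refine hm.2 p hpq (mem_forbiddenTimes_of_abs_sub_le
      (sub_resetTime_mem_forbiddenCenters (min_le_right k p))
      (hn.1.sub (resetTime_modEq_min p k)) ?_)
    rwa [abs_sub_comm, sub_right_comm]

lemma add_le_of_resetTime_add_eq_visit_add {p n i k f : ℕ} (hn : n ∈ visitTimes p) (hi : i < p)
    (h : resetTime k + f = n + i) : p + k ≤ f := by
  by_contra! hlt
  rcases lt_or_ge p k with hpk | hkp
  · refine hn.2 k hpk (mem_forbiddenTimes_of_abs_sub_le (resetTime_mem_forbiddenCenters k) rfl ?_)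
    rw [abs_le]
    omega
  · have hnear : n < 4 * visitScale p := by
      have := resetTime_strictMono.monotone hkp
      have := resetTime_le p
      have := eight_mul_le_visitScale p
      omega
    have hmod := hn.1
    rw [Int.ModEq, Int.emod_eq_of_lt (by omega) (by omega),
      Int.emod_eq_of_lt (by omega) (by omega)] at hmod
    omega

lemma exists_resetTime_add_age_eq (j : ℕ) :
    ∃ k, resetTime k + age (Set.range resetTime) j = j := by
  simpa using exists_mem_add_age_eq (S := Set.range resetTime) ⟨0, rfl⟩ j

lemma visitTimes_separated {p q n m i j : ℕ} (hn : n ∈ visitTimes p) (hm : m ∈ visitTimes q)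
    (hi : i < p) (hj : q ≤ j) (h : j + m = n + i) : p + q ≤ age (Set.range resetTime) j := by
  obtain ⟨k, hk⟩ := exists_resetTime_add_age_eq j
  by_contra! hlt
  have hfar := two_mul_max_lt_abs_sub_of_mem_visitTimes (Nat.zero_lt_of_lt hi) hn hm (by omega) k
  rw [lt_abs] at hfar
  omega

lemma eventually_add_le_age (K : ℕ) :
    ∀ᶠ j in atTop, ∀ p n i, n ∈ visitTimes p → i < p → j = n + i →
      p + K ≤ age (Set.range resetTime) j := by
  filter_upwards [eventually_ge_atTop (resetTime K)] with j hj p n i hn hi hji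
  obtain ⟨k, hk⟩ := exists_resetTime_add_age_eq j
  have hKk : K ≤ k := resetTime_strictMono.le_iff_le.mp (by
    have := age_le_sub (S := Set.range resetTime) ⟨K, rfl⟩ hj
    omega)
  exact (Nat.add_le_add_left hKk p).trans
    (add_le_of_resetTime_add_eq_visit_add hn hi (hk.trans hji))

lemma mul_visitScale_le_visitScale {p q : ℕ} (h : q < p) :
    54 * visitScale q * ((2 * p + 3) * (4 * p + 1)) * 2 ^ p ≤ visitScale p := by
  obtain ⟨r, rfl⟩ := Nat.exists_eq_add_one_of_ne_zero (Nat.ne_zero_of_lt h)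
  have hpow : ∀ {c}, c ≤ 5 → 4 * r + c ≤ 2 ^ (r + 3) := fun hc => by
    have := Nat.lt_two_pow_self (n := r)
    rw [pow_add]; omega
  have hq : visitScale q ≤ visitScale r :=
    Nat.pow_le_pow_right two_pos (by gcongr; omega)
  calc 54 * visitScale q * ((2 * (r + 1) + 3) * (4 * (r + 1) + 1)) * 2 ^ (r + 1)
      ≤ 2 ^ 6 * visitScale r * (2 ^ (r + 3) * 2 ^ (r + 3)) * 2 ^ (r + 1) := by
        gcongr
        · norm_num
        · exact le_trans (by omega) (hpow le_rfl)
        · exact le_trans (by omega) (hpow le_rfl)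
    _ = 2 ^ (13 * r ^ 2 + 3 * r + 13) := by rw [visitScale]; ring
    _ ≤ visitScale (r + 1) := Nat.pow_le_pow_right two_pos (by nlinarith)

lemma partialDensity_exists_add_mem_forbiddenTimes_le {p q N : ℕ} (h : q < p)
    (hN : 8 * visitScale q ≤ N) :
    partialDensity {m | ∃ n ≤ 8 * visitScale q, m + n ∈ forbiddenTimes p} N ≤ (1 / 2) ^ p := by
  have hp : (0 : ℝ) < visitScale p := by exact_mod_cast visitScale_pos p
  have hq : (1 : ℝ) ≤ visitScale q := by exact_mod_cast visitScale_pos q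
  have hscale : (54 * visitScale q * ((2 * p + 3) * (4 * p + 1)) * 2 ^ p : ℝ) ≤ visitScale p := by
    exact_mod_cast mul_visitScale_le_visitScale h
  calc _ ≤ 2 * ((8 * visitScale q : ℕ) + 1) *
        (3 * ((2 * p + 3) * (4 * p + 1)) / visitScale p : ℝ) :=
        partialDensity_exists_add_mem_le
          (partialDensity_forbiddenTimes_le (Nat.zero_lt_of_lt h)) hN
    _ ≤ 2 * (9 * visitScale q) * (3 * ((2 * p + 3) * (4 * p + 1)) / visitScale p) := by
        push_cast; gcongr; linarith
    _ ≤ (1 / 2) ^ p := by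
        rw [one_div, inv_pow, ← one_div, mul_div_assoc', div_le_div_iff₀ hp (by positivity)]
        linarith

lemma exists_le_modEq {M : ℕ} (hM : 0 < M) (r : ℤ) (m : ℕ) :
    ∃ n ≤ M, ((m + n : ℕ) : ℤ) ≡ r [ZMOD M] := by
  obtain ⟨n, hn, hmod⟩ := Int.existsUnique_equiv_nat (r - m) (b := M) (by exact_mod_cast hM)
  exact ⟨n, by exact_mod_cast hn.le, by simpa using hmod.add_left m⟩

lemma one_sub_pow_le_lowerDensity_visitTimes (q : ℕ) :
    1 - (1 / 2) ^ q ≤ lowerDensity {m | ∃ n ≤ 8 * visitScale q, m + n ∈ visitTimes q} := by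
  have hε : HasSum (fun r : ℕ => (1 / 2 : ℝ) ^ (q + 1 + r)) ((1 / 2) ^ q) := by
    simpa [pow_add] using hasSum_geometric_two.mul_left ((1 / 2 : ℝ) ^ (q + 1))
  rw [← hε.tsum_eq]
  refine one_sub_tsum_le_lowerDensity hε.summable
    (G := fun r => {m | ∃ n ≤ 8 * visitScale q, m + n ∈ forbiddenTimes (q + 1 + r)})
    (fun m hm => ?_) ?_
  · obtain ⟨n, hn, hmod⟩ := exists_le_modEq (M := 8 * visitScale q) (by simp [visitScale_pos])
      (4 * visitScale q) m
    have hnot : m + n ∉ visitTimes q := fun h => hm ⟨n, hn, h⟩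
    obtain ⟨p, hp, hmem⟩ : ∃ p > q, m + n ∈ forbiddenTimes p := by
      by_contra! h
      exact hnot ⟨by exact_mod_cast hmod, h⟩
    obtain ⟨r, rfl⟩ := Nat.exists_eq_add_of_le (Nat.succ_le_of_lt hp)
    exact Set.mem_iUnion.mpr ⟨r, n, hn, hmem⟩
  · filter_upwards [eventually_ge_atTop (8 * visitScale q)] with N hN r
    exact partialDensity_exists_add_mem_forbiddenTimes_le (by omega) hN

lemma isVisitingFamily_visitTimes {P : ℕ → ℝ}
    (hP : ∀ n s, s ≤ age (Set.range resetTime) n → 2 ^ s ≤ P n) :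
    IsVisitingFamily P visitTimes where
  block_unique {p q n m i i'} hn hm hi hi' h := by
    by_contra hne
    have hfar := two_mul_max_lt_abs_sub_of_mem_visitTimes (Nat.zero_lt_of_lt hi) hn hm hne 0
    rw [lt_abs, show resetTime 0 = 0 from rfl] at hfar
    omega
  separated hn hm hi hj h := hP _ _ (visitTimes_separated hn hm hi hj h)
  decay K := (eventually_add_le_age K).mono fun _ hj p n i hn hi h => hP _ _ (hj p n i hn hi h)
  dense q := ⟨_, one_sub_pow_le_lowerDensity_visitTimes q⟩

end VisitTimes

theorem exists_weightedShift_veryFrequentlyHC_not_chaotic_general {𝕜 : Type*}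
    [NontriviallyNormedField 𝕜] [TopologicalSpace.SeparableSpace 𝕜] :
    ∃ (w : ℕ → 𝕜) (Bw : C₀(ℕ, 𝕜) →L[𝕜] C₀(ℕ, 𝕜)),
      (∀ n, w n ≠ 0) ∧ (∃ C : ℝ, ∀ n, ‖w n‖ ≤ C) ∧
      (∀ (x : C₀(ℕ, 𝕜)) (n : ℕ), Bw x n = w (n + 1) * x (n + 1)) ∧
      VeryFrequentlyHypercyclic Bw ∧
      ¬ ((∃ x : C₀(ℕ, 𝕜), Dense (Set.range fun n : ℕ => (⇑Bw)^[n] x)) ∧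
          Dense {x : C₀(ℕ, 𝕜) | ∃ n : ℕ, 0 < n ∧ (⇑Bw)^[n] x = x}) ∧
      ¬ (∃ (c : 𝕜) (x : C₀(ℕ, 𝕜)), ‖c‖ = 1 ∧ x ≠ 0 ∧ Bw x = c • x) ∧
      ¬ (∀ U V : Set C₀(ℕ, 𝕜), IsOpen U → U.Nonempty → IsOpen V → V.Nonempty →
          ∃ N : ℕ, ∀ n ≥ N, ((fun z => (⇑Bw)^[n] z) '' U ∩ V).Nonempty) := by
  obtain ⟨a, ha⟩ := NormedField.exists_lt_norm 𝕜 2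
  have ha0 : a ≠ 0 := norm_pos_iff.mp (two_pos.trans ha)
  let f := age (Set.range resetTime)
  have hw0 : ∀ n, powerWeight a f n ≠ 0 := powerWeight_ne_zero ha0
  have hw : ∃ C, ∀ n, ‖powerWeight a f n‖ ≤ C :=
    ⟨‖a‖, norm_powerWeight_le (one_lt_two.trans ha).le (age_succ_le _)⟩
  have hprod : ∀ n, ‖weightProd (powerWeight a f) n‖ = ‖a‖ ^ f n := fun n => by
    rw [weightProd_powerWeight ha0 rfl, norm_pow]
  have hvisit : IsVisitingFamily (fun n => ‖weightProd (powerWeight a f) n‖) visitTimes :=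
    isVisitingFamily_visitTimes fun n s hs => by
      rw [hprod]
      exact (pow_le_pow_left₀ two_pos.le ha.le s).trans
        (pow_le_pow_right₀ (one_lt_two.trans ha).le hs)
  have hreset : ∃ᶠ n in atTop, ‖weightProd (powerWeight a f) n‖ ≤ 1 :=
    resetTime_strictMono.tendsto_atTop.frequently <| .of_forall fun k => by
      rw [hprod, show f (resetTime k) = 0 from age_eq_zero ⟨k, rfl⟩, pow_zero]
  exact ⟨_, weightedShift _ hw, hw0, hw, weightedShift_apply hw,
    hvisit.veryFrequentlyHypercyclic_weightedShift hw hw0,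
    fun h => not_dense_periodicPts_weightedShift hw hw0 hreset h.2,
    not_exists_unimodular_eigenvalue_weightedShift hw hw0 hreset,
    not_topologicallyMixing_weightedShift hw hreset⟩

/-- There exists a bounded sequence `w` of nonzero scalars such that the weighted backward
shift `B_w` on `c₀` (the continuous linear operator `Bw` with `(Bw x) n = w (n+1) * x (n+1)`)
is very frequently hypercyclic (for every nonempty open `U`, with `A = {n | B_w^n x ∈ U}`,
the lower density of `⋃_{n ≤ N} (A - n)` tends to `1`) but not chaotic; moreover it has no
unimodular eigenvalue and is not topologically mixing. -/
theorem exists_weightedShift_veryFrequentlyHC_not_chaotic {𝕜 : Type*} [RCLike 𝕜] :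
    ∃ (w : ℕ → 𝕜) (Bw : C₀(ℕ, 𝕜) →L[𝕜] C₀(ℕ, 𝕜)),
      (∀ n, w n ≠ 0) ∧ (∃ C : ℝ, ∀ n, ‖w n‖ ≤ C) ∧
      (∀ (x : C₀(ℕ, 𝕜)) (n : ℕ), Bw x n = w (n + 1) * x (n + 1)) ∧
      -- very frequently hypercyclic
      (∃ x : C₀(ℕ, 𝕜), ∀ U : Set C₀(ℕ, 𝕜), IsOpen U → U.Nonempty →
        Filter.Tendsto
          (fun N : ℕ => lowerDensity {m : ℕ | ∃ n ≤ N, (⇑Bw)^[m + n] x ∈ U})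
          Filter.atTop (nhds 1)) ∧
      -- not chaotic
      ¬ ((∃ x : C₀(ℕ, 𝕜), Dense (Set.range fun n : ℕ => (⇑Bw)^[n] x)) ∧
          Dense {x : C₀(ℕ, 𝕜) | ∃ n : ℕ, 0 < n ∧ (⇑Bw)^[n] x = x}) ∧
      -- no unimodular eigenvalues
      ¬ (∃ (c : 𝕜) (x : C₀(ℕ, 𝕜)), ‖c‖ = 1 ∧ x ≠ 0 ∧ Bw x = c • x) ∧
      -- not topologically mixing
      ¬ (∀ U V : Set C₀(ℕ, 𝕜), IsOpen U → U.Nonempty → IsOpen V → V.Nonempty →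
          ∃ N : ℕ, ∀ n ≥ N, ((fun z => (⇑Bw)^[n] z) '' U ∩ V).Nonempty) :=
  exists_weightedShift_veryFrequentlyHC_not_chaotic_general
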